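/- Let P be a program and D = Q0,…,Qn;θ1,…,θn an LD-derivation for P. Let σ be any substitution, and let Q0′ = Q0θ1⋯θnσ and Qn′ = Qnσ. Then there exists an unrestricted LD-derivation D′ = Q0′,…,Qn′ for P such that D is a lift of D′. -/

import Mathlib

/-!
Write `τ i = θ_{i+1} ⋯ θ_n σ` for the substitution still to be performed after the first `i` steps
of `D`.  The derivation `D'` has the queries `Q_i (τ i)`, and each of its specializations is the
identity.  As `τ i` is `θ_{i+1}` followed by `τ (i+1)`, it unifies the atom `A` selected in `Q_i`
with the head of the clause variant `C` used there.  Hence the instance `C (τ i)` has head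
`A (τ i)`, and replacing that atom by the body of `C (τ i)` turns `Q_i (τ i)` into
`Q_{i+1} (τ (i+1))`.  This is `Deriv.tail_succ` together with `DStep.uStep`.
-/

/- Formalization of definite clause programs with the cut (Prolog),
   LD-resolution, LD-trees, pruning by the cut, specifications,
   correctness and completeness notions. -/

namespace LP

/-- First-order terms over function symbols `F`; variables are indexed by `ℕ`. -/
inductive Tm (F : Type) : Type
  | var : ℕ → Tm F
  | fn  : F → List (Tm F) → Tm F

/-- Ordinary (non-cut) atoms over function symbols `F` and predicate symbols `Pr`. -/
structure Atom (F Pr : Type) : Type where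
  pred : Pr
  args : List (Tm F)

/-- Extended atoms: ordinary atoms together with the cut `!`. -/
inductive EAtom (F Pr : Type) : Type
  | cut : EAtom F Pr
  | atm : Atom F Pr → EAtom F Pr

/-- A query is a finite sequence of extended atoms. -/
abbrev Query (F Pr : Type) := List (EAtom F Pr)

/-- A definite clause (whose body may contain cuts). -/
structure Clause (F Pr : Type) : Type where
  head : Atom F Pr
  body : Query F Pr

/-- A program (with cuts) is a finite sequence of clauses. -/
abbrev Prog (F Pr : Type) := List (Clause F Pr)

/-- Substitutions. -/
abbrev Subst (F : Type) := ℕ → Tm F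

variable {F Pr : Type}

/-- The empty (identity) substitution. -/
def Subst.idS : Subst F := fun n => Tm.var n

/-- Applying a substitution to a term. -/
def Tm.subst (θ : Subst F) : Tm F → Tm F
  | .var n => θ n
  | .fn f ts => .fn f (ts.attach.map (fun t => Tm.subst θ t.1))
decreasing_by
  have := List.sizeOf_lt_of_mem t.2
  simp only [Tm.fn.sizeOf_spec]
  omega

/-- The list of variables of a term. -/
def Tm.varsL : Tm F → List ℕ
  | .var n => [n]
  | .fn _ ts => ts.attach.flatMap (fun t => Tm.varsL t.1)
decreasing_by
  have := List.sizeOf_lt_of_mem t.2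
  simp only [Tm.fn.sizeOf_spec]
  omega

/-- The set of variables of a term. -/
def Tm.vars (t : Tm F) : Set ℕ := {n | n ∈ t.varsL}

/-- A term is ground if it has no variables. -/
def Tm.Ground (t : Tm F) : Prop := t.vars = ∅

def Atom.subst (θ : Subst F) (A : Atom F Pr) : Atom F Pr :=
  ⟨A.pred, A.args.map (Tm.subst θ)⟩

def Atom.vars (A : Atom F Pr) : Set ℕ := {n | ∃ t ∈ A.args, n ∈ t.vars}

/-- A ground atom (an element of the Herbrand base `HB` when it moreover holds). -/
def Atom.Ground (A : Atom F Pr) : Prop := A.vars = ∅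

def EAtom.subst (θ : Subst F) : EAtom F Pr → EAtom F Pr
  | .cut => .cut
  | .atm A => .atm (Atom.subst θ A)

def EAtom.vars : EAtom F Pr → Set ℕ
  | .cut => ∅
  | .atm A => A.vars

def EAtom.Ground (a : EAtom F Pr) : Prop := a.vars = ∅

def Query.subst (θ : Subst F) (Q : Query F Pr) : Query F Pr := Q.map (EAtom.subst θ)

def Query.vars (Q : Query F Pr) : Set ℕ := {n | ∃ a ∈ Q, n ∈ EAtom.vars a}

def Query.Ground (Q : Query F Pr) : Prop := Query.vars Q = ∅

def Clause.subst (θ : Subst F) (C : Clause F Pr) : Clause F Pr :=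
  ⟨Atom.subst θ C.head, Query.subst θ C.body⟩

def Clause.vars (C : Clause F Pr) : Set ℕ := C.head.vars ∪ Query.vars C.body

def Clause.Ground (C : Clause F Pr) : Prop := C.vars = ∅

/-- The domain of a substitution. -/
def Subst.dom (θ : Subst F) : Set ℕ := {n | θ n ≠ .var n}

/-- The range variables of a substitution. -/
def Subst.rng (θ : Subst F) : Set ℕ := {m | ∃ n, θ n ≠ .var n ∧ m ∈ (θ n).vars}

/-- All variables of a substitution. -/
def Subst.varSet (θ : Subst F) : Set ℕ := θ.dom ∪ θ.rng

/-- Composition: apply `θ` first, then `σ`. -/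
def Subst.comp (θ σ : Subst F) : Subst F := fun n => (θ n).subst σ

/-- A substitution is idempotent when its domain and range are disjoint. -/
def Subst.Idempotent (θ : Subst F) : Prop := Disjoint θ.dom θ.rng

/-- A substitution is ground if it maps every domain variable to a ground term. -/
def Subst.GroundOn (θ : Subst F) : Prop := ∀ n ∈ θ.dom, (θ n).Ground

/-- `compN θ i k` is the composition `θ i ; θ (i+1) ; ⋯ ; θ (i+k-1)`. -/
def compN (θ : ℕ → Subst F) : ℕ → ℕ → Subst F
  | _, 0 => Subst.idS
  | i, k+1 => Subst.comp (θ i) (compN θ (i+1) k)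

/-- `θ` unifies atoms `A` and `B`. -/
def Unifies (θ : Subst F) (A B : Atom F Pr) : Prop := Atom.subst θ A = Atom.subst θ B

/-- `θ` is a most general unifier of `A` and `B`. -/
def IsMgu (θ : Subst F) (A B : Atom F Pr) : Prop :=
  Unifies θ A B ∧ ∀ σ : Subst F, Unifies σ A B → ∃ δ : Subst F, ∀ n, σ n = (θ n).subst δ

/-- A unifier is relevant if all its variables occur in the unified atoms. -/
def Relevant (θ : Subst F) (A B : Atom F Pr) : Prop := θ.varSet ⊆ A.vars ∪ B.vars

/-- `B` is an instance of `A`. -/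
def Atom.Inst (B A : Atom F Pr) : Prop := ∃ θ : Subst F, B = Atom.subst θ A

/-- `Q'` is an instance of `Q`. -/
def Query.Inst (Q' Q : Query F Pr) : Prop := ∃ θ : Subst F, Q' = Query.subst θ Q

/-- `C'` is an instance of `C`. -/
def Clause.Inst (C' C : Clause F Pr) : Prop := ∃ θ : Subst F, C' = Clause.subst θ C

/-- `C` and `C'` are variants of each other. -/
def Variant (C C' : Clause F Pr) : Prop := Clause.Inst C C' ∧ Clause.Inst C' C

/-! ### Specifications -/

/-- Membership of an extended atom in `S ∪ {!}`. -/
def EAtomIn (S : Set (Atom F Pr)) : EAtom F Pr → Prop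
  | .cut => True
  | .atm A => A ∈ S

/-- `S ⊨ Q`: every atom of `Q` is in `S ∪ {!}`. -/
def SpecModels (S : Set (Atom F Pr)) (Q : Query F Pr) : Prop := ∀ a ∈ Q, EAtomIn S a

/-- A set of atoms is closed under substitution. -/
def SubstClosed (S : Set (Atom F Pr)) : Prop := ∀ A ∈ S, ∀ θ : Subst F, Atom.subst θ A ∈ S

/-- The restriction of a set of atoms to ground atoms (to `HB`). -/
def HBRestrict (S : Set (Atom F Pr)) : Set (Atom F Pr) := {A ∈ S | A.Ground}

/-- A ground atom `A` is covered by clause `C` w.r.t. `S`: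
`A` is the head of a ground instance of `C` whose body atoms are in `S ∪ {!}`. -/
def CoveredBy (S : Set (Atom F Pr)) (C : Clause F Pr) (A : Atom F Pr) : Prop :=
  ∃ θ : Subst F, Clause.Ground (Clause.subst θ C) ∧ Atom.subst θ C.head = A ∧
    SpecModels S (Query.subst θ C.body)

/-- The least Herbrand model of `P` (the cut is treated as true). -/
inductive MP (P : Prog F Pr) : Atom F Pr → Prop where
  | step : ∀ C ∈ P, ∀ θ : Subst F, Clause.Ground (Clause.subst θ C) →
      (∀ A : Atom F Pr, EAtom.atm A ∈ Query.subst θ C.body → MP P A) →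
      MP P (Atom.subst θ C.head)

/-! ### General interpretations and logical consequence -/

structure Interp (F Pr : Type) : Type 1 where
  carrier : Type
  fnI : F → List carrier → carrier
  predI : Pr → List carrier → Prop

def Interp.evalTm (I : Interp F Pr) (v : ℕ → I.carrier) : Tm F → I.carrier
  | .var n => v n
  | .fn f ts => I.fnI f (ts.attach.map (fun t => I.evalTm v t.1))
decreasing_by
  have := List.sizeOf_lt_of_mem t.2
  simp only [Tm.fn.sizeOf_spec]
  omega

def Interp.holdsA (I : Interp F Pr) (v : ℕ → I.carrier) (A : Atom F Pr) : Prop :=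
  I.predI A.pred (A.args.map (I.evalTm v))

/-- The cut is true in every interpretation. -/
def Interp.holdsE (I : Interp F Pr) (v : ℕ → I.carrier) : EAtom F Pr → Prop
  | .cut => True
  | .atm A => I.holdsA v A

def Interp.holdsQ (I : Interp F Pr) (v : ℕ → I.carrier) (Q : Query F Pr) : Prop :=
  ∀ a ∈ Q, I.holdsE v a

def Interp.ModelsClause (I : Interp F Pr) (C : Clause F Pr) : Prop :=
  ∀ v : ℕ → I.carrier, I.holdsQ v C.body → I.holdsA v C.head

def Interp.ModelsProg (I : Interp F Pr) (P : Prog F Pr) : Prop :=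
  ∀ C ∈ P, I.ModelsClause C

/-- `P ⊨ Q` (truth of a formula is truth of its universal closure). -/
def Entails (P : Prog F Pr) (Q : Query F Pr) : Prop :=
  ∀ I : Interp F Pr, I.ModelsProg P → ∀ v : ℕ → I.carrier, I.holdsQ v Q

/-- `M` (a set of ground atoms) is a Herbrand model of `P`. -/
def HerbModels (M : Set (Atom F Pr)) (P : Prog F Pr) : Prop :=
  ∀ C ∈ P, ∀ θ : Subst F, Clause.Ground (Clause.subst θ C) →
    (∀ A : Atom F Pr, EAtom.atm A ∈ Query.subst θ C.body → A ∈ M) →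
    Atom.subst θ C.head ∈ M

/-- Removing all occurrences of the cut from a query. -/
def rmCutQ (Q : Query F Pr) : Query F Pr :=
  Q.filterMap (fun a => match a with | .cut => none | .atm A => some (.atm A))

/-- Removing all occurrences of the cut from a program. -/
def rmCutProg (P : Prog F Pr) : Prog F Pr := P.map (fun C => ⟨C.head, rmCutQ C.body⟩)

/-! ### LD-derivations -/

/-- Variables occurring in the queries `Q 0 … Q i`, the mgu's `sub 0 … sub (i-1)`
and the clause variants `cls 0 … cls (i-1)` of a derivation. -/
def histVars (Q : ℕ → Query F Pr) (sub : ℕ → Subst F)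
    (cls : ℕ → Option (Clause F Pr)) (i : ℕ) : Set ℕ :=
  {n | (∃ j ≤ i, n ∈ Query.vars (Q j)) ∨ (∃ j < i, n ∈ (sub j).varSet) ∨
       (∃ j < i, ∃ C : Clause F Pr, cls j = some C ∧ n ∈ C.vars)}

/-- One LD-resolution step (names the clause variant used, if any):
either a leading cut is deleted, or the first atom is resolved
with a clause via an idempotent relevant mgu. -/
def DStep (Q Q' : Query F Pr) (θ : Subst F) (oc : Option (Clause F Pr)) : Prop :=
  (∃ rest : Query F Pr, Q = .cut :: rest ∧ Q' = rest ∧ θ = Subst.idS ∧ oc = none) ∨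
  (∃ (A : Atom F Pr) (rest : Query F Pr) (C : Clause F Pr),
      Q = .atm A :: rest ∧ oc = some C ∧
      IsMgu θ A C.head ∧ θ.Idempotent ∧ Relevant θ A C.head ∧
      Q' = Query.subst θ (C.body ++ rest))

/-- A finite LD-derivation: queries `Q 0, …, Q len`,
mgu's `sub 0, …, sub (len-1)` and clause variants `cls 0, …, cls (len-1)`,
with clause variants standardized apart. -/
structure Deriv (F Pr : Type) : Type where
  len : ℕ
  Q : ℕ → Query F Pr
  sub : ℕ → Subst F
  cls : ℕ → Option (Clause F Pr)
  step : ∀ i < len, DStep (Q i) (Q (i+1)) (sub i) (cls i)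
  fresh : ∀ i < len, ∀ C : Clause F Pr, cls i = some C →
    Disjoint C.vars (histVars Q sub cls i)

/-- The derivation only uses (variants of) clauses of the program `P`. -/
def Deriv.FromProg (P : Prog F Pr) (D : Deriv F Pr) : Prop :=
  ∀ i < D.len, ∀ C : Clause F Pr, D.cls i = some C → ∃ C0 ∈ P, Variant C C0

def Deriv.Successful (D : Deriv F Pr) : Prop := D.Q D.len = []

/-- The computed answer `Q0 θ1 ⋯ θn` of a derivation. -/
def Deriv.answer (D : Deriv F Pr) : Query F Pr := Query.subst (compN D.sub 0 D.len) (D.Q 0)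

/-- At position `j` the query has a (protected) suffix of length `L`; the prefix
before it succeeds exactly at position `m` (the subderivation for the prefix ends there). -/
def Deriv.SuffixEndsAt (D : Deriv F Pr) (j L m : ℕ) : Prop :=
  j ≤ m ∧ m ≤ D.len ∧ (∀ i, j ≤ i → i < m → L < (D.Q i).length) ∧ (D.Q m).length = L

/-- An infinite LD-derivation. -/
structure InfLD (F Pr : Type) (P : Prog F Pr) : Type where
  Q : ℕ → Query F Pr
  sub : ℕ → Subst F
  cls : ℕ → Option (Clause F Pr)
  step : ∀ i : ℕ, DStep (Q i) (Q (i+1)) (sub i) (cls i)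
  fresh : ∀ i : ℕ, ∀ C : Clause F Pr, cls i = some C →
    Disjoint C.vars (histVars Q sub cls i)
  prog : ∀ i : ℕ, ∀ C : Clause F Pr, cls i = some C → ∃ C0 ∈ P, Variant C C0

/-- One SLD-resolution step, with an arbitrarily selected atom. -/
def SStep (Q Q' : Query F Pr) (θ : Subst F) (oc : Option (Clause F Pr)) : Prop :=
  (∃ l r : Query F Pr, Q = l ++ .cut :: r ∧ Q' = l ++ r ∧ θ = Subst.idS ∧ oc = none) ∨
  (∃ (l r : Query F Pr) (A : Atom F Pr) (C : Clause F Pr),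
      Q = l ++ .atm A :: r ∧ oc = some C ∧
      IsMgu θ A C.head ∧ θ.Idempotent ∧ Relevant θ A C.head ∧
      Q' = Query.subst θ (l ++ C.body ++ r))

/-- An infinite SLD-derivation (under an arbitrary selection rule). -/
structure InfSLD (F Pr : Type) (P : Prog F Pr) : Type where
  Q : ℕ → Query F Pr
  sub : ℕ → Subst F
  cls : ℕ → Option (Clause F Pr)
  step : ∀ i : ℕ, SStep (Q i) (Q (i+1)) (sub i) (cls i)
  fresh : ∀ i : ℕ, ∀ C : Clause F Pr, cls i = some C →
    Disjoint C.vars (histVars Q sub cls i)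
  prog : ∀ i : ℕ, ∀ C : Clause F Pr, cls i = some C → ∃ C0 ∈ P, Variant C C0

/-! ### Unrestricted LD-derivations and lifts -/

/-- One step of an unrestricted LD-derivation for program `P`. -/
def UStep (P : Prog F Pr) (Q Q' : Query F Pr) (θ : Subst F)
    (oc : Option (Clause F Pr)) : Prop :=
  (∃ rest : Query F Pr, Q = .cut :: rest ∧ Q' = rest ∧ θ = Subst.idS ∧ oc = none) ∨
  (∃ (A : Atom F Pr) (rest B : Query F Pr) (C : Clause F Pr),
      Q = .atm A :: rest ∧ oc = some C ∧ C ∈ P ∧ Subst.dom θ ⊆ Query.vars Q ∧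
      Clause.Inst ⟨Atom.subst θ A, B⟩ C ∧ Q' = B ++ Query.subst θ rest)

/-- A finite unrestricted LD-derivation for `P`. -/
structure UDeriv (F Pr : Type) (P : Prog F Pr) : Type where
  len : ℕ
  Q : ℕ → Query F Pr
  sub : ℕ → Subst F
  cls : ℕ → Option (Clause F Pr)
  step : ∀ i < len, UStep P (Q i) (Q (i+1)) (sub i) (cls i)

def UDeriv.Successful {P : Prog F Pr} (E : UDeriv F Pr P) : Prop := E.Q E.len = []

def UDeriv.answer {P : Prog F Pr} (E : UDeriv F Pr P) : Query F Pr :=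
  Query.subst (compN E.sub 0 E.len) (E.Q 0)

/-- The LD-derivation `D` is a lift of the unrestricted LD-derivation `E`. -/
def IsLift {P : Prog F Pr} (D : Deriv F Pr) (E : UDeriv F Pr P) : Prop :=
  Query.Inst (E.Q 0) (D.Q 0) ∧ D.len = E.len ∧
  (∀ i < D.len, (E.cls i = none ↔ D.cls i = none) ∧
    ∀ C C' : Clause F Pr, E.cls i = some C → D.cls i = some C' → Variant C' C)

/-! ### c-s-specifications (call-success specifications) -/

/-- `P` is c-s-correct w.r.t. `(pre, post)`: in every LD-derivation beginning with an
atomic query from `pre`, each selected atom is in `pre ∪ {!}` and each atomic computed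
answer of a successful subderivation is in `post ∪ {!}`. -/
def CsCorrect (P : Prog F Pr) (pre post : Set (Atom F Pr)) : Prop :=
  ∀ D : Deriv F Pr, D.FromProg P → (∃ A ∈ pre, D.Q 0 = [.atm A]) →
    (∀ i ≤ D.len, ∀ (a : EAtom F Pr) (rest : Query F Pr), D.Q i = a :: rest →
        a = .cut ∨ ∃ A ∈ pre, a = .atm A) ∧
    (∀ j m : ℕ, ∀ (A : Atom F Pr) (rest : Query F Pr), D.Q j = .atm A :: rest →
        D.SuffixEndsAt j rest.length m →
        Atom.subst (compN D.sub j (m - j)) A ∈ post)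

/-- The `i`-th element of `Q` (if any) is in `S ∪ {!}`. -/
def QIn (S : Set (Atom F Pr)) (Q : Query F Pr) (i : ℕ) : Prop :=
  ∀ a : EAtom F Pr, Q[i]? = some a → EAtomIn S a

/-- A clause is well-asserted w.r.t. a c-s-specification `(pre, post)`. -/
def WellAssertedClause (pre post : Set (Atom F Pr)) (C : Clause F Pr) : Prop :=
  ∀ θ : Subst F, Atom.subst θ C.head ∈ pre →
    (∀ k < C.body.length,
      (∀ i < k, QIn post (Query.subst θ C.body) i) → QIn pre (Query.subst θ C.body) k) ∧
    ((∀ i < C.body.length, QIn post (Query.subst θ C.body) i) → Atom.subst θ C.head ∈ post)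

/-- A query is well-asserted w.r.t. `(pre, post)`. -/
def WellAssertedQuery (pre post : Set (Atom F Pr)) (Q : Query F Pr) : Prop :=
  ∀ θ : Subst F, ∀ k < Q.length,
    (∀ i < k, QIn post (Query.subst θ Q) i) → QIn pre (Query.subst θ Q) k

/-! ### c-coveredness -/

/-- Ground atom `A` is c-covered w.r.t. `S` and `(pre, post)` by the clause `C`,
which is (a variant of) the `i`-th clause of `P`. -/
def CCoveredBy (P : Prog F Pr) (S pre post : Set (Atom F Pr)) (A : Atom F Pr)
    (C : Clause F Pr) (i : ℕ) : Prop :=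
  (∃ C0 : Clause F Pr, P[i]? = some C0 ∧ Variant C C0) ∧
  CoveredBy S C A ∧
  (∀ j < i, ∀ (H' : Atom F Pr) (A0 A1 : Query F Pr),
      P[j]? = some ⟨H', A0 ++ .cut :: A1⟩ → EAtom.cut ∉ A0 → H'.pred = C.head.pred →
      ∀ H'' ∈ pre, Atom.Inst A H'' →
        ∀ θ : Subst F, Atom.Ground (Atom.subst θ H'') →
          ¬ CoveredBy (HBRestrict post) ⟨H', A0⟩ (Atom.subst θ H'')) ∧
  (∀ B0 B1 : Query F Pr, C.body = B0 ++ .cut :: B1 →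
    ∀ ρ : Subst F, Subst.dom ρ ⊆ C.head.vars → (Subst.rng ρ ∩ C.vars) ⊆ C.head.vars →
      Disjoint (Subst.dom ρ) (Subst.rng ρ) →
      Atom.subst ρ C.head ∈ pre → Atom.Inst A (Atom.subst ρ C.head) →
      ∀ η : Subst F, Subst.dom η = Query.vars (Query.subst ρ B0) →
        Query.Ground (Query.subst η (Query.subst ρ B0)) →
        SpecModels post (Query.subst η (Query.subst ρ B0)) →
        CoveredBy S ⟨Atom.subst η (Atom.subst ρ C.head),
                     Query.subst η (Query.subst ρ B1)⟩ A)

/-- `A` is c-covered by some clause of `P`. -/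
def CCoveredByProg (P : Prog F Pr) (S pre post : Set (Atom F Pr)) (A : Atom F Pr) : Prop :=
  ∃ (i : ℕ) (C : Clause F Pr), P[i]? = some C ∧ CCoveredBy P S pre post A C i

/-! ### Level mappings, recurrence, acceptability -/

/-- Extension of a level mapping to extended atoms, with `|!| = 0`. -/
def eLvl (lvl : Atom F Pr → ℕ) : EAtom F Pr → ℕ
  | .cut => 0
  | .atm A => lvl A

/-- `P` is recurrent w.r.t. the level mapping `lvl`. -/
def Recurrent (P : Prog F Pr) (lvl : Atom F Pr → ℕ) : Prop :=
  ∀ C ∈ P, ∀ θ : Subst F, Clause.Ground (Clause.subst θ C) →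
    ∀ a ∈ Query.subst θ C.body, eLvl lvl a < lvl (Atom.subst θ C.head)

/-- `P` is acceptable w.r.t. the specification `S` and the level mapping `lvl`. -/
def Acceptable (P : Prog F Pr) (S : Set (Atom F Pr)) (lvl : Atom F Pr → ℕ) : Prop :=
  (∀ A : Atom F Pr, MP P A → A ∈ S) ∧
  (∀ C ∈ P, ∀ θ : Subst F, Clause.Ground (Clause.subst θ C) →
    ∀ i < C.body.length, (∀ j < i, QIn S (Query.subst θ C.body) j) →
      ∀ a : EAtom F Pr, (Query.subst θ C.body)[i]? = some a →
        eLvl lvl a < lvl (Atom.subst θ C.head))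

/-- A query is bounded w.r.t. a level mapping. -/
def BoundedQuery (lvl : Atom F Pr → ℕ) (Q : Query F Pr) : Prop :=
  ∃ k : ℕ, ∀ a ∈ Q, ∀ θ : Subst F, EAtom.Ground (EAtom.subst θ a) →
    eLvl lvl (EAtom.subst θ a) < k

/-! ### Completeness notions -/

/-- `P` is complete for the query `Q` w.r.t. `S`. -/
def CompleteFor (P : Prog F Pr) (S : Set (Atom F Pr)) (Q : Query F Pr) : Prop :=
  ∀ θ : Subst F, Query.Ground (Query.subst θ Q) → SpecModels S (Query.subst θ Q) →
    ∀ A : Atom F Pr, EAtom.atm A ∈ Query.subst θ Q → MP P A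

end LP

namespace LP

variable {F Pr : Type}

/-! ### LD-trees and SLD-trees -/

/-- A clause is applicable to an atom if (a variant of) its head unifies with it. -/
def Applicable (A : Atom F Pr) (C0 : Clause F Pr) : Prop :=
  ∃ (C : Clause F Pr) (θ : Subst F), Variant C C0 ∧ Atom.subst θ A = Atom.subst θ C.head

open Classical in
/-- The clauses of `P` applicable to `A`, in program order. -/
noncomputable def applicables (P : Prog F Pr) (A : Atom F Pr) : Prog F Pr :=
  P.filter (fun C0 => decide (Applicable A C0))

/-- Variables occurring in the labels, mgu's and clause variants along the path
from the root to `p` (inclusive). -/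
def pathVarsAux (label : List ℕ → Query F Pr) (esub : List ℕ → Subst F)
    (ecls : List ℕ → Option (Clause F Pr)) (p : List ℕ) : Set ℕ :=
  {n | ∃ q : List ℕ, q <+: p ∧
        (n ∈ Query.vars (label q) ∨ n ∈ (esub q).varSet ∨
         ∃ C : Clause F Pr, ecls q = some C ∧ n ∈ C.vars)}

/-- The LD-tree for a program `P` and an initial query `Q0`.  Nodes are coded by
lists of child indices (the root is `[]`); `label` gives the query at a node,
`esub` and `ecls` the mgu and the clause variant of the edge into a node. -/
structure LDTree (F Pr : Type) (P : Prog F Pr) (Q0 : Query F Pr) : Type where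
  dom : Set (List ℕ)
  label : List ℕ → Query F Pr
  esub : List ℕ → Subst F
  ecls : List ℕ → Option (Clause F Pr)
  root_mem : [] ∈ dom
  root_label : label [] = Q0
  root_esub : esub [] = Subst.idS
  root_ecls : ecls [] = none
  prefix_closed : ∀ p q : List ℕ, p <+: q → q ∈ dom → p ∈ dom
  sibling_closed : ∀ (p : List ℕ) (k k' : ℕ), k' ≤ k → p ++ [k] ∈ dom → p ++ [k'] ∈ dom
  empty_leaf : ∀ p ∈ dom, label p = [] → ∀ k : ℕ, p ++ [k] ∉ dom
  cut_step : ∀ p ∈ dom, ∀ rest : Query F Pr, label p = .cut :: rest →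
    (p ++ [0] ∈ dom ∧ label (p ++ [0]) = rest ∧ esub (p ++ [0]) = Subst.idS ∧
     ecls (p ++ [0]) = none ∧ ∀ k : ℕ, k ≠ 0 → p ++ [k] ∉ dom)
  atom_children_mem : ∀ p ∈ dom, ∀ (A : Atom F Pr) (rest : Query F Pr),
    label p = .atm A :: rest →
    ∀ k : ℕ, (p ++ [k] ∈ dom ↔ k < (applicables P A).length)
  atom_step : ∀ p ∈ dom, ∀ (A : Atom F Pr) (rest : Query F Pr),
    label p = .atm A :: rest → ∀ k : ℕ, p ++ [k] ∈ dom →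
      ∃ C C0 : Clause F Pr, (applicables P A)[k]? = some C0 ∧
        ecls (p ++ [k]) = some C ∧ Variant C C0 ∧
        IsMgu (esub (p ++ [k])) A C.head ∧ (esub (p ++ [k])).Idempotent ∧
        Relevant (esub (p ++ [k])) A C.head ∧
        label (p ++ [k]) = Query.subst (esub (p ++ [k])) (C.body ++ rest) ∧
        Disjoint C.vars (pathVarsAux label esub ecls p)

/-- An SLD-tree for `P` and `Q0`, under the selection rule `sel`
(`sel p` is the position of the selected atom of the query at node `p`). -/
structure SLDTree (F Pr : Type) (P : Prog F Pr) (Q0 : Query F Pr) : Type where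
  dom : Set (List ℕ)
  label : List ℕ → Query F Pr
  sel : List ℕ → ℕ
  esub : List ℕ → Subst F
  ecls : List ℕ → Option (Clause F Pr)
  root_mem : [] ∈ dom
  root_label : label [] = Q0
  root_esub : esub [] = Subst.idS
  root_ecls : ecls [] = none
  prefix_closed : ∀ p q : List ℕ, p <+: q → q ∈ dom → p ∈ dom
  sibling_closed : ∀ (p : List ℕ) (k k' : ℕ), k' ≤ k → p ++ [k] ∈ dom → p ++ [k'] ∈ dom
  empty_leaf : ∀ p ∈ dom, label p = [] → ∀ k : ℕ, p ++ [k] ∉ dom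
  sel_lt : ∀ p ∈ dom, label p ≠ [] → sel p < (label p).length
  cut_step : ∀ p ∈ dom, ∀ l r : Query F Pr, label p = l ++ .cut :: r → sel p = l.length →
    (p ++ [0] ∈ dom ∧ label (p ++ [0]) = l ++ r ∧ esub (p ++ [0]) = Subst.idS ∧
     ecls (p ++ [0]) = none ∧ ∀ k : ℕ, k ≠ 0 → p ++ [k] ∉ dom)
  atom_children_mem : ∀ p ∈ dom, ∀ (l : Query F Pr) (A : Atom F Pr) (r : Query F Pr),
    label p = l ++ .atm A :: r → sel p = l.length →
    ∀ k : ℕ, (p ++ [k] ∈ dom ↔ k < (applicables P A).length)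
  atom_step : ∀ p ∈ dom, ∀ (l : Query F Pr) (A : Atom F Pr) (r : Query F Pr),
    label p = l ++ .atm A :: r → sel p = l.length → ∀ k : ℕ, p ++ [k] ∈ dom →
      ∃ C C0 : Clause F Pr, (applicables P A)[k]? = some C0 ∧
        ecls (p ++ [k]) = some C ∧ Variant C C0 ∧
        IsMgu (esub (p ++ [k])) A C.head ∧ (esub (p ++ [k])).Idempotent ∧
        Relevant (esub (p ++ [k])) A C.head ∧
        label (p ++ [k]) = Query.subst (esub (p ++ [k])) (l ++ C.body ++ r) ∧
        Disjoint C.vars (pathVarsAux label esub ecls p)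

/-- `P` is semi-complete w.r.t. `S`: complete for every query possessing a finite SLD-tree. -/
def SemiComplete (P : Prog F Pr) (S : Set (Atom F Pr)) : Prop :=
  ∀ Q : Query F Pr, (∃ T : SLDTree F Pr P Q, T.dom.Finite) → CompleteFor P S Q

/-! ### The preorder sequence `seq(T)` and pruning -/

/-- The subtree of `S` rooted at `q` is finite. -/
def SubtreeFin (S : Set (List ℕ)) (q : List ℕ) : Prop := {x ∈ S | q <+: x}.Finite

/-- Node `p` occurs in the preorder sequence `seq` of the subgraph `S`:
all subtrees to the left of the path to `p` are finite. -/
def InSeq (S : Set (List ℕ)) (p : List ℕ) : Prop :=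
  p ∈ S ∧ ∀ (q : List ℕ) (k k' : ℕ), (q ++ [k]) <+: p → k' < k → SubtreeFin S (q ++ [k'])

/-- `p` strictly precedes `q` in the preorder ordering of tree nodes. -/
def PreLt (p q : List ℕ) : Prop :=
  (p <+: q ∧ p ≠ q) ∨
  ∃ (r : List ℕ) (a b : ℕ), a < b ∧ (r ++ [a]) <+: p ∧ (r ++ [b]) <+: q

variable {P : Prog F Pr} {Q0 : Query F Pr}

/-- An executing node: a node whose query starts with the cut. -/
def LDTree.ExecNode (T : LDTree F Pr P Q0) (e : List ℕ) : Prop :=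
  ∃ rest : Query F Pr, T.label e = .cut :: rest

/-- `s` is the first node `Q_j` of the cutting sequence of the executing node `e`:
the protected suffix of length `|label e|` persists from `s` to `e`,
and `s` is the shallowest such node. -/
def LDTree.CutStart (T : LDTree F Pr P Q0) (e s : List ℕ) : Prop :=
  s <+: e ∧
  (∀ q : List ℕ, s <+: q → q <+: e → q ≠ e → (T.label e).length < (T.label q).length) ∧
  (s = [] ∨ ∃ (p : List ℕ) (k : ℕ), s = p ++ [k] ∧
      ¬ ((T.label e).length < (T.label p).length))

/-- The introducing node of a cutting sequence starting at `s`
(for a cut of the initial query it is the root itself). -/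
def cutIntro (s : List ℕ) : List ℕ := if s = [] then [] else s.dropLast

/-- `x` is pruned by (the cutting sequence of) the executing node `e`:
`x` lies in a subtree rooted at a child, to the right of the cutting sequence,
of a node of the cutting sequence. -/
def LDTree.PrunedByExec (T : LDTree F Pr P Q0) (e x : List ℕ) : Prop :=
  T.ExecNode e ∧ ∃ s : List ℕ, T.CutStart e s ∧
    ∃ (q : List ℕ) (k k' : ℕ), cutIntro s <+: q ∧ (q ++ [k]) <+: e ∧ k < k' ∧
      (q ++ [k']) <+: x

/-- `e` is the (n+1)-st executing node in the preorder sequence of the subgraph `S`. -/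
def LDTree.IsNthExec (T : LDTree F Pr P Q0) (S : Set (List ℕ)) (n : ℕ) (e : List ℕ) : Prop :=
  e ∈ S ∧ T.ExecNode e ∧ InSeq S e ∧
  {e' : List ℕ | e' ∈ S ∧ T.ExecNode e' ∧ InSeq S e' ∧ PreLt e' e}.Finite ∧
  {e' : List ℕ | e' ∈ S ∧ T.ExecNode e' ∧ InSeq S e' ∧ PreLt e' e}.ncard = n

/-- The sequence of trees `T_0, T_1, …` of the definition of the pruned LD-tree. -/
def LDTree.stage (T : LDTree F Pr P Q0) : ℕ → Set (List ℕ)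
  | 0 => T.dom
  | n+1 => T.stage n \
      {x : List ℕ | ∃ e : List ℕ, T.IsNthExec (T.stage n) n e ∧ T.PrunedByExec e x}

/-- The pruned LD-tree `pruned(T)`: the nodes surviving all stages
and occurring in the preorder sequence of the resulting subgraph. -/
def LDTree.prunedDom (T : LDTree F Pr P Q0) : Set (List ℕ) :=
  {p ∈ ⋂ n : ℕ, T.stage n | InSeq (⋂ n : ℕ, T.stage n) p}

/-- Composition of the mgu's along a path (auxiliary, from node `q` down `rest`). -/
def LDTree.branchSubstAux (T : LDTree F Pr P Q0) : List ℕ → List ℕ → Subst F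
  | _, [] => Subst.idS
  | q, k :: rest => Subst.comp (T.esub (q ++ [k])) (T.branchSubstAux (q ++ [k]) rest)

/-- Composition of the mgu's along the branch from the root to `p`. -/
def LDTree.branchSubst (T : LDTree F Pr P Q0) (p : List ℕ) : Subst F :=
  T.branchSubstAux [] p

/-- The node `p` occurs in a cutting sequence of the subgraph `S` of `T`
only as its introducing node. -/
def LDTree.OnlyIntro (T : LDTree F Pr P Q0) (S : Set (List ℕ)) (p : List ℕ) : Prop :=
  ∀ e s : List ℕ, e ∈ S → T.ExecNode e → T.CutStart e s →
    (∀ q : List ℕ, cutIntro s <+: q → q <+: e → q ∈ S) →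
    cutIntro s <+: p → p <+: e → (s ≠ [] ∧ p = cutIntro s)

end LP

namespace LP

variable {F Pr : Type}

/-! ### Composition and identity of substitutions -/

theorem Tm.subst_fn (θ : Subst F) (f : F) (ts : List (Tm F)) :
    Tm.subst θ (.fn f ts) = .fn f (ts.map (Tm.subst θ)) := by
  rw [Tm.subst]
  simp

theorem Tm.subst_subst (θ σ : Subst F) : ∀ t : Tm F,
    Tm.subst σ (Tm.subst θ t) = Tm.subst (Subst.comp θ σ) t
  | .var n => by simp [Tm.subst, Subst.comp]
  | .fn f ts => by
    simp only [Tm.subst_fn, List.map_map, Tm.fn.injEq, true_and]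
    exact List.map_congr_left fun t ht => Tm.subst_subst θ σ t
decreasing_by
  have := List.sizeOf_lt_of_mem ht
  simp only [Tm.fn.sizeOf_spec]
  omega

theorem Tm.subst_idS : ∀ t : Tm F, Tm.subst Subst.idS t = t
  | .var n => by simp [Tm.subst, Subst.idS]
  | .fn f ts => by
    simp only [Tm.subst_fn, Tm.fn.injEq, true_and]
    exact (List.map_congr_left fun t ht => Tm.subst_idS t).trans (List.map_id ts)
decreasing_by
  have := List.sizeOf_lt_of_mem ht
  simp only [Tm.fn.sizeOf_spec]
  omega

theorem Atom.subst_subst (θ σ : Subst F) (A : Atom F Pr) :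
    Atom.subst σ (Atom.subst θ A) = Atom.subst (Subst.comp θ σ) A := by
  simp [Atom.subst, Tm.subst_subst]

theorem Atom.subst_idS (A : Atom F Pr) : Atom.subst Subst.idS A = A := by
  simp [Atom.subst, funext (Tm.subst_idS (F := F))]

theorem EAtom.subst_subst (θ σ : Subst F) (a : EAtom F Pr) :
    EAtom.subst σ (EAtom.subst θ a) = EAtom.subst (Subst.comp θ σ) a := by
  cases a <;> simp [EAtom.subst, Atom.subst_subst]

theorem EAtom.subst_idS (a : EAtom F Pr) : EAtom.subst Subst.idS a = a := by
  cases a <;> simp [EAtom.subst, Atom.subst_idS]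

theorem Query.subst_subst (θ σ : Subst F) (Q : Query F Pr) :
    Query.subst σ (Query.subst θ Q) = Query.subst (Subst.comp θ σ) Q := by
  simp [Query.subst, EAtom.subst_subst]

theorem Query.subst_idS (Q : Query F Pr) : Query.subst Subst.idS Q = Q := by
  simp [Query.subst, funext (EAtom.subst_idS (F := F) (Pr := Pr))]

theorem Subst.dom_idS : Subst.dom (Subst.idS : Subst F) = ∅ := by
  simp [Subst.dom, Subst.idS]

theorem Subst.comp_assoc (α β γ : Subst F) :
    Subst.comp (Subst.comp α β) γ = Subst.comp α (Subst.comp β γ) := by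
  funext n
  simp [Subst.comp, Tm.subst_subst]

theorem Subst.idS_comp (σ : Subst F) : Subst.comp Subst.idS σ = σ := by
  funext n
  simp [Subst.comp, Subst.idS, Tm.subst]

/-! ### Instantiating an LD-derivation -/

/-- The substitution `θ_{i+1} ⋯ θ_n σ` that remains to be applied after `i` steps of `D`. -/
def Deriv.tail (D : Deriv F Pr) (σ : Subst F) (i : ℕ) : Subst F :=
  Subst.comp (compN D.sub i (D.len - i)) σ

theorem Deriv.tail_succ (D : Deriv F Pr) (σ : Subst F) {i : ℕ} (hi : i < D.len) :
    D.tail σ i = Subst.comp (D.sub i) (D.tail σ (i + 1)) := by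
  have h : D.len - i = (D.len - (i + 1)) + 1 := by omega
  rw [Deriv.tail, h, compN, Subst.comp_assoc, Deriv.tail]

/-- An LD-resolution step `Q, Q'` with mgu `θ` becomes, after applying `θ` and then `τ` to `Q` and
`τ` to `Q'`, an unrestricted step with the identity specialization.  The clause of `P` used there
(if any) is one of which the clause used in the LD-step is a variant. -/
theorem DStep.uStep {P : Prog F Pr} {Q Q' : Query F Pr} {θ : Subst F}
    {oc : Option (Clause F Pr)} (h : DStep Q Q' θ oc)
    (hP : ∀ C, oc = some C → ∃ C0 ∈ P, Variant C C0) (τ : Subst F) :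
    ∃ oc' : Option (Clause F Pr),
      UStep P (Query.subst (Subst.comp θ τ) Q) (Query.subst τ Q') Subst.idS oc' ∧
      (oc' = none ↔ oc = none) ∧
      ∀ C C', oc' = some C → oc = some C' → Variant C' C := by
  rcases h with ⟨rest, rfl, rfl, rfl, rfl⟩ | ⟨A, rest, C, rfl, rfl, hmgu, -, -, rfl⟩
  · refine ⟨none, Or.inl ⟨Query.subst τ Q', ?_, rfl, rfl, rfl⟩, by simp, by simp⟩
    simp [Subst.idS_comp, Query.subst, EAtom.subst]
  · obtain ⟨C0, hC0, hv⟩ := hP C rfl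
    refine ⟨some C0, Or.inr ⟨Atom.subst (Subst.comp θ τ) A, Query.subst (Subst.comp θ τ) rest,
      Query.subst (Subst.comp θ τ) C.body, C0, rfl, rfl, hC0, ?_, ?_, ?_⟩, by simp, ?_⟩
    · simp [Subst.dom_idS]
    · obtain ⟨ρ, rfl⟩ := hv.1
      refine ⟨Subst.comp ρ (Subst.comp θ τ), ?_⟩
      have hu := hmgu.1
      simp only [Clause.subst, Atom.subst_idS, Clause.mk.injEq, Query.subst_subst, and_true]
      rw [← Atom.subst_subst θ τ A, hu]
      simp only [Clause.subst, Atom.subst_subst, Subst.comp_assoc]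
    -- the body and the remaining atoms receive the same substitution `θ` followed by `τ`
    · rw [Query.subst_idS, Query.subst_subst]
      simp [Query.subst]
    · rintro C₁ C₂ ⟨⟩ ⟨⟩
      exact hv

/-- **Lemma 2 of the paper.**  Let `D = Q_0,…,Q_n; θ_1,…,θ_n` be an LD-derivation for
`P` and `σ` a substitution.  Then there is an unrestricted LD-derivation
`D' = Q_0θ_1⋯θ_nσ, …, Q_nσ` for `P` such that `D` is a lift of `D'`. -/
theorem antilifting {F Pr : Type} (P : Prog F Pr)
    (D : Deriv F Pr) (hP : D.FromProg P) (σ : Subst F) :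
    ∃ E : UDeriv F Pr P, E.len = D.len ∧
      E.Q 0 = Query.subst σ (Query.subst (compN D.sub 0 D.len) (D.Q 0)) ∧
      E.Q E.len = Query.subst σ (D.Q D.len) ∧
      IsLift D E := by
  have key : ∀ i, ∃ oc' : Option (Clause F Pr), i < D.len →
      UStep P (Query.subst (D.tail σ i) (D.Q i)) (Query.subst (D.tail σ (i + 1)) (D.Q (i + 1)))
        Subst.idS oc' ∧
      (oc' = none ↔ D.cls i = none) ∧
      ∀ C C', oc' = some C → D.cls i = some C' → Variant C' C := by
    intro i
    by_cases hi : i < D.len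
    · obtain ⟨oc', h⟩ := (D.step i hi).uStep (hP i hi) (D.tail σ (i + 1))
      exact ⟨oc', fun _ => D.tail_succ σ hi ▸ h⟩
    · exact ⟨none, fun h => absurd h hi⟩
  choose cls hcls using key
  refine ⟨⟨D.len, fun i => Query.subst (D.tail σ i) (D.Q i), fun _ => Subst.idS, cls,
    fun i hi => (hcls i hi).1⟩, rfl, ?_, ?_, ⟨_, rfl⟩, rfl, fun i hi => (hcls i hi).2⟩
  · simp [Deriv.tail, Query.subst_subst]
  · simp [Deriv.tail, compN, Subst.idS_comp]

end LP
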